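/- arXiv:2012.12034 — 4 statements merged into one kernel-verified Lean document; each statement's English description precedes it below -/
import Mathlib

section
/- Let T and S be bounded linear operators on H each admitting an A-adjoint. Then for each choice of sign, ω_A(TS) ≤ ‖T‖_A · ω_A(S) + (1/2) · ω_A(TS ± S T^{♯_A}). -/
noncomputable section

open ContinuousLinearMap

variable {H : Type*} [NormedAddCommGroup H] [InnerProductSpace ℂ H] [CompleteSpace H]

/-- The semi-inner product induced by the positive operator `A`: `⟨x, y⟩_A := ⟨A x, y⟩`. -/
def innA (A : H →L[ℂ] H) (x y : H) : ℂ := inner ℂ (A x) y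

/-- The seminorm induced by `A`: `‖x‖_A := ⟨x, x⟩_A ^ (1/2)`. -/
def vnormA (A : H →L[ℂ] H) (x : H) : ℝ := Real.sqrt (innA A x x).re

/-- The `A`-operator seminorm: `‖T‖_A := sup {‖T x‖_A : ‖x‖_A = 1}`. -/
def opNormA (A T : H →L[ℂ] H) : ℝ :=
  sSup {c : ℝ | ∃ x : H, vnormA A x = 1 ∧ c = vnormA A (T x)}

/-- The `A`-numerical radius: `ω_A(T) := sup {|⟨T x, x⟩_A| : ‖x‖_A = 1}`. -/
def wA (A T : H →L[ℂ] H) : ℝ :=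
  sSup {c : ℝ | ∃ x : H, vnormA A x = 1 ∧ c = ‖innA A (T x) x‖}

/-- `T` admits an `A`-adjoint: there is a bounded operator `X` with `A X = T* A`. -/
def HasAAdjoint (A T : H →L[ℂ] H) : Prop :=
  ∃ X : H →L[ℂ] H, A ∘L X = adjoint T ∘L A

/-- `X` is the reduced `A`-adjoint `T^{♯_A}` of `T`: it solves `A X = T* A` and its range
is contained in the closure of the range of `A`. -/
def IsReducedAAdjoint (A T X : H →L[ℂ] H) : Prop :=
  (A ∘L X = adjoint T ∘L A) ∧ ∀ y : H, X y ∈ closure (Set.range A)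

/-- If `a ^ 2 ^ n` is dominated by a constant multiple of `r ^ 2 ^ n` for all `n`,
then `a ≤ r`. -/
lemma le_of_forall_pow_two_pow_le {a r b C : ℝ} (hr : 0 ≤ r) (hb : 0 < b) (hC : 0 ≤ C)
    (h : ∀ n : ℕ, a ^ 2 ^ n * b ≤ C * r ^ 2 ^ n) : a ≤ r := by
  by_contra! hlt
  have ha : 0 < a := hr.trans_lt hlt
  have hq : r / a < 1 := (div_lt_one ha).2 hlt
  obtain ⟨n, hn⟩ := exists_pow_lt_of_lt_one (show 0 < b / (C + 1) by positivity) hq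
  have hle : (r / a) ^ 2 ^ n ≤ (r / a) ^ n :=
    pow_le_pow_of_le_one (by positivity) hq.le Nat.lt_two_pow_self.le
  have hlt' := hle.trans_lt hn
  rw [div_pow, div_lt_div_iff₀ (by positivity) (by positivity)] at hlt'
  have h₁ := h n
  have h₂ : 0 ≤ r ^ 2 ^ n := by positivity
  nlinarith

/-- A bounded operator which is symmetric for the semi-inner product `⟨B x, B y⟩` is bounded
for the induced seminorm, with the same constant. -/
lemma norm_comp_le_of_symmetric (B R : H →L[ℂ] H)
    (h : ∀ x y, inner ℂ (B (R x)) (B y) = inner ℂ (B x) (B (R y))) (x : H) :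
    ‖B (R x)‖ ≤ ‖R‖ * ‖B x‖ := by
  have hpow : ∀ (n : ℕ) (x y : H),
      inner ℂ (B ((R ^ n) x)) (B y) = inner ℂ (B x) (B ((R ^ n) y)) := by
    intro n
    induction n with
    | zero => simp
    | succ k ih =>
      intro x y
      rw [pow_succ, mul_apply_eq_comp, ih, h, ← mul_apply_eq_comp R, ← pow_succ', pow_succ]
  have hsq : ∀ n : ℕ, ‖B ((R ^ n) x)‖ ^ 2 ≤ ‖B x‖ * ‖B ((R ^ (n + n)) x)‖ := by
    intro n
    have h₁ := norm_inner_le_norm (𝕜 := ℂ) (B x) (B ((R ^ (n + n)) x))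
    rw [pow_add, mul_apply_eq_comp, ← hpow, inner_self_eq_norm_sq_to_K] at h₁
    simpa [pow_add] using h₁
  rcases (norm_nonneg (B x)).eq_or_lt with h0 | hpos
  · have h₁ := hsq 1
    rw [← h0, zero_mul, pow_one] at h₁
    rw [← h0, mul_zero]
    nlinarith
  have hiter : ∀ n : ℕ,
      ‖B (R x)‖ ^ 2 ^ n * ‖B x‖ ≤ ‖B ((R ^ 2 ^ n) x)‖ * ‖B x‖ ^ 2 ^ n := by
    intro n
    induction n with
    | zero => simp
    | succ k ih =>
      have h₁ := pow_le_pow_left₀ (by positivity) ih 2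
      have h₂ := hsq (2 ^ k)
      rw [← mul_two, ← pow_succ] at h₂
      refine le_of_mul_le_mul_right ?_ hpos
      calc ‖B (R x)‖ ^ 2 ^ (k + 1) * ‖B x‖ * ‖B x‖
          = (‖B (R x)‖ ^ 2 ^ k * ‖B x‖) ^ 2 := by rw [pow_succ 2 k]; ring
        _ ≤ (‖B ((R ^ 2 ^ k) x)‖ * ‖B x‖ ^ 2 ^ k) ^ 2 := h₁
        _ = ‖B ((R ^ 2 ^ k) x)‖ ^ 2 * ‖B x‖ ^ 2 ^ (k + 1) := by rw [pow_succ 2 k]; ring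
        _ ≤ ‖B x‖ * ‖B ((R ^ 2 ^ (k + 1)) x)‖ * ‖B x‖ ^ 2 ^ (k + 1) := by gcongr
        _ = _ := by ring
  refine le_of_forall_pow_two_pow_le (C := ‖B‖ * ‖x‖) (by positivity) hpos (by positivity)
    fun n => (hiter n).trans ?_
  calc ‖B ((R ^ 2 ^ n) x)‖ * ‖B x‖ ^ 2 ^ n
      ≤ (‖B‖ * (‖R‖ ^ 2 ^ n * ‖x‖)) * ‖B x‖ ^ 2 ^ n := by
        gcongr
        refine (B.le_opNorm _).trans ?_
        gcongr
        refine ((R ^ 2 ^ n).le_opNorm x).trans ?_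
        gcongr
        exact norm_pow_le' R (by positivity)
    _ = ‖B‖ * ‖x‖ * (‖R‖ * ‖B x‖) ^ 2 ^ n := by rw [mul_pow]; ring

/-- An operator is `B`-bounded if it is bounded for the seminorm `x ↦ ‖B x‖`. -/
def IsSeminormBounded (B T : H →L[ℂ] H) : Prop :=
  ∃ C : ℝ, 0 ≤ C ∧ ∀ x, ‖B (T x)‖ ≤ C * ‖B x‖

/-- An operator having an adjoint for the semi-inner product `⟨B x, B y⟩` is bounded for the
induced seminorm. -/
lemma isSeminormBounded_of_adjoint (B T X : H →L[ℂ] H)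
    (h : ∀ x y, inner ℂ (B (X x)) (B y) = inner ℂ (B x) (B (T y))) :
    IsSeminormBounded B T := by
  have h' : ∀ x y, inner ℂ (B (T x)) (B y) = inner ℂ (B x) (B (X y)) := fun x y => by
    rw [← inner_conj_symm, ← h, inner_conj_symm]
  refine ⟨√‖X * T‖, Real.sqrt_nonneg _, fun x => ?_⟩
  have hsymm := norm_comp_le_of_symmetric B (X * T)
    (fun x y => by simp only [mul_apply_eq_comp]; rw [h, h']) x
  have h₁ := norm_inner_le_norm (𝕜 := ℂ) (B x) (B (X (T x)))
  rw [← h', inner_self_eq_norm_sq_to_K] at h₁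
  have h₂ : ‖B (T x)‖ ^ 2 ≤ ‖B x‖ * ‖B (X (T x))‖ := by simpa using h₁
  refine abs_le_of_sq_le_sq' ?_ (by positivity) |>.2
  rw [mul_pow, Real.sq_sqrt (norm_nonneg _)]
  calc ‖B (T x)‖ ^ 2 ≤ ‖B x‖ * ‖B (X (T x))‖ := h₂
    _ ≤ ‖B x‖ * (‖X * T‖ * ‖B x‖) := by gcongr; exact hsymm
    _ = ‖X * T‖ * ‖B x‖ ^ 2 := by ring

namespace IsSeminormBounded

variable {B T S : H →L[ℂ] H}

lemma mul (hT : IsSeminormBounded B T) (hS : IsSeminormBounded B S) :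
    IsSeminormBounded B (T * S) := by
  obtain ⟨C, hC, hT⟩ := hT
  obtain ⟨D, hD, hS⟩ := hS
  refine ⟨C * D, by positivity, fun x => (hT (S x)).trans ?_⟩
  rw [mul_assoc]
  exact mul_le_mul_of_nonneg_left (hS x) hC

lemma add (hT : IsSeminormBounded B T) (hS : IsSeminormBounded B S) :
    IsSeminormBounded B (T + S) := by
  obtain ⟨C, hC, hT⟩ := hT
  obtain ⟨D, hD, hS⟩ := hS
  refine ⟨C + D, by positivity, fun x => ?_⟩
  rw [add_apply, map_add, add_mul]
  exact norm_add_le_of_le (hT x) (hS x)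

lemma smul (c : ℂ) (hT : IsSeminormBounded B T) : IsSeminormBounded B (c • T) := by
  obtain ⟨C, hC, hT⟩ := hT
  refine ⟨‖c‖ * C, by positivity, fun x => ?_⟩
  rw [smul_apply, map_smul, norm_smul, mul_assoc]
  exact mul_le_mul_of_nonneg_left (hT x) (norm_nonneg c)

end IsSeminormBounded

section Factorization

variable {A B : H →L[ℂ] H}

lemma innA_eq_inner (hB : A = adjoint B ∘L B) (x y : H) :
    innA A x y = inner ℂ (B x) (B y) := by
  rw [innA, hB, comp_apply, adjoint_inner_left]

lemma vnormA_eq_norm (hB : A = adjoint B ∘L B) (x : H) : vnormA A x = ‖B x‖ := by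
  rw [vnormA, innA_eq_inner hB, inner_self_eq_norm_sq_to_K]
  norm_cast
  exact Real.sqrt_sq (norm_nonneg _)

lemma inner_map_of_comp_eq (hB : A = adjoint B ∘L B) {T X : H →L[ℂ] H}
    (h : A ∘L X = adjoint T ∘L A) (x y : H) :
    inner ℂ (B (X x)) (B y) = inner ℂ (B x) (B (T y)) := by
  rw [← innA_eq_inner hB, ← innA_eq_inner hB, innA, innA, ← adjoint_inner_left,
    ← comp_apply, h, comp_apply]

lemma opNormA_nonneg (A T : H →L[ℂ] H) : 0 ≤ opNormA A T :=
  Real.sSup_nonneg fun _ ⟨_, _, hc⟩ => hc ▸ Real.sqrt_nonneg _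

lemma wA_nonneg (A T : H →L[ℂ] H) : 0 ≤ wA A T :=
  Real.sSup_nonneg fun _ ⟨_, _, hc⟩ => hc ▸ norm_nonneg _

lemma norm_map_inv_norm_smul {z : H} (hz : ‖B z‖ ≠ 0) :
    ‖B (((‖B z‖⁻¹ : ℝ) : ℂ) • z)‖ = 1 := by
  rw [map_smul, norm_smul, Complex.norm_real, norm_inv, norm_norm, inv_mul_cancel₀ hz]

lemma norm_map_le_opNormA (hB : A = adjoint B ∘L B) {T : H →L[ℂ] H}
    (hT : IsSeminormBounded B T) (z : H) : ‖B (T z)‖ ≤ opNormA A T * ‖B z‖ := by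
  obtain ⟨C, hC, hT⟩ := hT
  rcases eq_or_ne ‖B z‖ 0 with h0 | hz
  · simpa [h0] using hT z
  have hle : ‖B (T (((‖B z‖⁻¹ : ℝ) : ℂ) • z))‖ ≤ opNormA A T := by
    refine le_csSup ⟨C, ?_⟩ ⟨_, ?_, (vnormA_eq_norm hB _).symm⟩
    · rintro c ⟨x, hx, rfl⟩
      rw [vnormA_eq_norm hB] at hx ⊢
      simpa [hx] using hT x
    · rw [vnormA_eq_norm hB, norm_map_inv_norm_smul hz]
  rw [map_smul, map_smul, norm_smul, Complex.norm_real, norm_inv, norm_norm,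
    inv_mul_eq_div, div_le_iff₀ (by positivity)] at hle
  exact hle

lemma norm_inner_map_le_wA (hB : A = adjoint B ∘L B) {S : H →L[ℂ] H}
    (hS : IsSeminormBounded B S) (z : H) :
    ‖inner ℂ (B (S z)) (B z)‖ ≤ wA A S * ‖B z‖ ^ 2 := by
  obtain ⟨C, hC, hS⟩ := hS
  rcases eq_or_ne ‖B z‖ 0 with h0 | hz
  · rw [norm_eq_zero] at h0
    simp [h0]
  have hle : ‖innA A (S (((‖B z‖⁻¹ : ℝ) : ℂ) • z)) (((‖B z‖⁻¹ : ℝ) : ℂ) • z)‖ ≤ wA A S := by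
    refine le_csSup ⟨C, ?_⟩ ⟨_, ?_, rfl⟩
    · rintro c ⟨x, hx, rfl⟩
      rw [vnormA_eq_norm hB] at hx
      rw [innA_eq_inner hB]
      refine (norm_inner_le_norm _ _).trans ?_
      simpa [hx] using hS x
    · rw [vnormA_eq_norm hB, norm_map_inv_norm_smul hz]
  rw [innA_eq_inner hB, map_smul, map_smul, map_smul, inner_smul_left, inner_smul_right,
    norm_mul, norm_mul, RCLike.norm_conj, Complex.norm_real, norm_inv, norm_norm,
    ← mul_assoc, ← mul_inv, inv_mul_eq_div, div_le_iff₀ (by positivity), ← sq] at hle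
  exact hle

/-- Polarization bound for the symmetrized sesquilinear form of `S`. -/
lemma norm_inner_add_inner_le_add_sq (hB : A = adjoint B ∘L B) {S : H →L[ℂ] H}
    (hS : IsSeminormBounded B S) (x y : H) :
    ‖inner ℂ (B (S x)) (B y) + inner ℂ (B (S y)) (B x)‖
      ≤ wA A S * (‖B x‖ ^ 2 + ‖B y‖ ^ 2) := by
  have hpol : inner ℂ (B (S (x + y))) (B (x + y)) - inner ℂ (B (S (x - y))) (B (x - y))
      = 2 * (inner ℂ (B (S x)) (B y) + inner ℂ (B (S y)) (B x)) := by
    simp only [map_add, map_sub, inner_add_left, inner_add_right, inner_sub_left,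
      inner_sub_right]
    ring
  have h₁ := norm_sub_le_of_le (norm_inner_map_le_wA hB hS (x + y))
    (norm_inner_map_le_wA hB hS (x - y))
  rw [hpol, norm_mul, Complex.norm_ofNat, ← mul_add] at h₁
  have h₂ := parallelogram_law_with_norm ℂ (B x) (B y)
  rw [← map_add, ← map_sub] at h₂
  have h₃ : ‖B (x + y)‖ ^ 2 + ‖B (x - y)‖ ^ 2 = 2 * (‖B x‖ ^ 2 + ‖B y‖ ^ 2) := by
    linarith
  rw [h₃] at h₁
  linarith

lemma norm_inner_add_inner_le (hB : A = adjoint B ∘L B) {S : H →L[ℂ] H}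
    (hS : IsSeminormBounded B S) {x y : H} {M : ℝ} (hx : ‖B x‖ = 1) (hy : ‖B y‖ ≤ M) :
    ‖inner ℂ (B (S x)) (B y) + inner ℂ (B (S y)) (B x)‖ ≤ 2 * (M * wA A S) := by
  have hM : 0 ≤ M := (norm_nonneg _).trans hy
  have key : ∀ N : ℝ, M < N →
      ‖inner ℂ (B (S x)) (B y) + inner ℂ (B (S y)) (B x)‖ ≤ 2 * (N * wA A S) := by
    intro N hMN
    have hN : 0 < N := hM.trans_lt hMN
    have h₁ := norm_inner_add_inner_le_add_sq hB hS x (((N⁻¹ : ℝ) : ℂ) • y)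
    have hy' : ‖B (((N⁻¹ : ℝ) : ℂ) • y)‖ ≤ 1 := by
      rw [map_smul, norm_smul, Complex.norm_real, Real.norm_of_nonneg (by positivity),
        inv_mul_le_iff₀ hN, mul_one]
      exact hy.trans hMN.le
    have h₂ : wA A S * (‖B x‖ ^ 2 + ‖B (((N⁻¹ : ℝ) : ℂ) • y)‖ ^ 2) ≤ wA A S * 2 := by
      refine mul_le_mul_of_nonneg_left ?_ (wA_nonneg A S)
      rw [hx]
      nlinarith [norm_nonneg (B (((N⁻¹ : ℝ) : ℂ) • y))]
    have h₃ := h₁.trans h₂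
    rw [map_smul, map_smul, map_smul, inner_smul_left, inner_smul_right, Complex.conj_ofReal,
      ← mul_add, norm_mul, Complex.norm_real, Real.norm_of_nonneg (by positivity),
      inv_mul_le_iff₀ hN] at h₃
    linarith
  have hlim : Filter.Tendsto (fun N : ℝ => 2 * (N * wA A S)) (nhdsWithin M (Set.Ioi M))
      (nhds (2 * (M * wA A S))) :=
    ((by fun_prop : Continuous fun N : ℝ => 2 * (N * wA A S)).tendsto M).mono_left
      nhdsWithin_le_nhds
  exact ge_of_tendsto hlim (Filter.eventually_of_mem self_mem_nhdsWithin key)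

lemma norm_inner_sub_inner_le (hB : A = adjoint B ∘L B) {S : H →L[ℂ] H}
    (hS : IsSeminormBounded B S) {x y : H} {M : ℝ} (hx : ‖B x‖ = 1) (hy : ‖B y‖ ≤ M) :
    ‖inner ℂ (B (S x)) (B y) - inner ℂ (B (S y)) (B x)‖ ≤ 2 * (M * wA A S) := by
  have h := norm_inner_add_inner_le hB hS (y := Complex.I • y) (M := M) hx
    (by rwa [map_smul, norm_smul, Complex.norm_I, one_mul])
  rw [map_smul, map_smul, map_smul, inner_smul_left, inner_smul_right, Complex.conj_I,
    neg_mul, ← sub_eq_add_neg, ← mul_sub, norm_mul, Complex.norm_I, one_mul] at h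
  exact h

lemma norm_map_adjoint_le (hB : A = adjoint B ∘L B) {T X : H →L[ℂ] H}
    (hT : IsSeminormBounded B T)
    (h : ∀ x y, inner ℂ (B (X x)) (B y) = inner ℂ (B x) (B (T y))) (x : H) :
    ‖B (X x)‖ ≤ opNormA A T * ‖B x‖ := by
  have h₁ := norm_inner_le_norm (𝕜 := ℂ) (B x) (B (T (X x)))
  rw [← h, inner_self_eq_norm_sq_to_K] at h₁
  have h₂ : ‖B (X x)‖ ^ 2 ≤ ‖B x‖ * ‖B (T (X x))‖ := by simpa using h₁
  have h₃ : ‖B x‖ * ‖B (T (X x))‖ ≤ ‖B x‖ * (opNormA A T * ‖B (X x)‖) := by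
    gcongr
    exact norm_map_le_opNormA hB hT _
  rcases (norm_nonneg (B (X x))).eq_or_lt with h0 | hpos
  · rw [← h0]
    exact mul_nonneg (opNormA_nonneg A T) (norm_nonneg _)
  · refine le_of_mul_le_mul_right ?_ hpos
    linarith

end Factorization

theorem stmt0 (A : H →L[ℂ] H) (hA : A.IsPositive) (hA0 : A ≠ 0)
    (T S Tsharp : H →L[ℂ] H)
    (hT : IsReducedAAdjoint A T Tsharp) (hS : HasAAdjoint A S)
    (σ : ℂ) (hσ : σ = 1 ∨ σ = -1) :
    wA A (T * S) ≤ opNormA A T * wA A S + (1 / 2) * wA A (T * S + σ • (S * Tsharp)) := by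
  obtain ⟨B, hB⟩ := CStarAlgebra.nonneg_iff_eq_star_mul_self.mp
    ((nonneg_iff_isPositive A).mpr hA)
  change A = adjoint B ∘L B at hB
  obtain ⟨X, hX⟩ := hS
  have hadj := inner_map_of_comp_eq hB hT.1
  have hTb : IsSeminormBounded B T := isSeminormBounded_of_adjoint B T Tsharp hadj
  have hSb : IsSeminormBounded B S :=
    isSeminormBounded_of_adjoint B S X (inner_map_of_comp_eq hB hX)
  have hTs := norm_map_adjoint_le hB hTb hadj
  have hTsb : IsSeminormBounded B Tsharp := ⟨_, opNormA_nonneg A T, hTs⟩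
  have hsum : IsSeminormBounded B (T * S + σ • (S * Tsharp)) :=
    (hTb.mul hSb).add ((hSb.mul hTsb).smul σ)
  refine Real.sSup_le ?_ (add_nonneg (mul_nonneg (opNormA_nonneg A T) (wA_nonneg A S))
    (mul_nonneg (by norm_num) (wA_nonneg A _)))
  rintro c ⟨x, hx, rfl⟩
  rw [vnormA_eq_norm hB] at hx
  have hy : ‖B (Tsharp x)‖ ≤ opNormA A T := by simpa [hx] using hTs x
  have hTS : inner ℂ (B (T (S x))) (B x) = inner ℂ (B (S x)) (B (Tsharp x)) := by
    rw [← inner_conj_symm, ← hadj, inner_conj_symm]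
  have hw := norm_inner_map_le_wA hB hsum x
  rw [hx, one_pow, mul_one] at hw
  have hopp : ‖inner ℂ (B (S x)) (B (Tsharp x)) - σ * inner ℂ (B (S (Tsharp x))) (B x)‖
      ≤ 2 * (opNormA A T * wA A S) := by
    rcases hσ with rfl | rfl
    · simpa using norm_inner_sub_inner_le hB hSb hx hy
    · simpa using norm_inner_add_inner_le hB hSb hx hy
  have hconj : (starRingEnd ℂ) σ = σ := by rcases hσ with rfl | rfl <;> simp
  rw [add_apply, smul_apply, mul_apply_eq_comp, mul_apply_eq_comp,
    map_add, map_smul, inner_add_left, inner_smul_left, hconj, hTS] at hw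
  rw [innA_eq_inner hB, mul_apply_eq_comp, hTS]
  have htri := norm_add_le_of_le hopp hw
  rw [sub_add_add_cancel, ← two_mul, norm_mul, Complex.norm_ofNat] at htri
  linarith
end
end

section
/- For all vectors x, y, z ∈ H, one has |⟨x,y⟩_A|² + |⟨x,z⟩_A|² ≤ ‖x‖_A² · ( max{‖y‖_A², ‖z‖_A²} + |⟨y,z⟩_A| ). -/
noncomputable section

open ContinuousLinearMap

variable {H : Type*} [NormedAddCommGroup H] [InnerProductSpace ℂ H] [CompleteSpace H]

/-- In a complex inner product space, the squared moduli of the inner products of `u` with two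
vectors are controlled by `‖u‖ ^ 2` and the Gram data of these vectors. -/
theorem norm_inner_sq_add_norm_inner_sq_le {E : Type*} [NormedAddCommGroup E]
    [InnerProductSpace ℂ E] (u v w : E) :
    ‖inner ℂ u v‖ ^ 2 + ‖inner ℂ u w‖ ^ 2 ≤
      ‖u‖ ^ 2 * (max (‖v‖ ^ 2) (‖w‖ ^ 2) + ‖inner ℂ v w‖) := by
  set a : ℂ := inner ℂ v u
  set b : ℂ := inner ℂ w u
  have ha : ‖inner ℂ u v‖ = ‖a‖ := norm_inner_symm u v
  have hb : ‖inner ℂ u w‖ = ‖b‖ := norm_inner_symm u w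
  rw [ha, hb]
  set s : ℝ := ‖a‖ ^ 2 + ‖b‖ ^ 2 with hs
  set M : ℝ := max (‖v‖ ^ 2) (‖w‖ ^ 2)
  set g : ℝ := ‖inner ℂ v w‖
  have hg : 0 ≤ g := norm_nonneg _
  have hvM : ‖v‖ ^ 2 ≤ M := le_max_left _ _
  have hwM : ‖w‖ ^ 2 ≤ M := le_max_right _ _
  have hM : 0 ≤ M := (sq_nonneg _).trans hvM
  have hs0 : 0 ≤ s := by positivity
  have hinner : inner ℂ u (a • v + b • w) = (s : ℂ) := by
    rw [inner_add_right, inner_smul_right, inner_smul_right, ← inner_conj_symm u v,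
      ← inner_conj_symm u w, Complex.mul_conj', Complex.mul_conj', hs]
    push_cast
    rfl
  have hcs : s ≤ ‖u‖ * ‖a • v + b • w‖ := by
    have h := norm_inner_le_norm (𝕜 := ℂ) u (a • v + b • w)
    rwa [hinner, Complex.norm_real, Real.norm_of_nonneg hs0] at h
  have hp : ‖a • v + b • w‖ ^ 2 ≤ s * (M + g) := by
    have hre : RCLike.re (inner ℂ (a • v) (b • w)) ≤ ‖a‖ * ‖b‖ * g := by
      refine (RCLike.re_le_norm _).trans_eq ?_
      rw [inner_smul_left, inner_smul_right, norm_mul, norm_mul, RCLike.norm_conj, mul_assoc]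
    rw [norm_add_sq (𝕜 := ℂ), norm_smul, norm_smul, mul_pow, mul_pow]
    have h₁ := mul_le_mul_of_nonneg_left hvM (sq_nonneg ‖a‖)
    have h₂ := mul_le_mul_of_nonneg_left hwM (sq_nonneg ‖b‖)
    have h₃ := mul_nonneg (sq_nonneg (‖a‖ - ‖b‖)) hg
    rw [hs]
    linarith
  rcases hs0.eq_or_lt with h0 | hpos
  · rw [← h0]
    positivity
  · refine le_of_mul_le_mul_left ?_ hpos
    calc s * s ≤ (‖u‖ * ‖a • v + b • w‖) * (‖u‖ * ‖a • v + b • w‖) := by gcongr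
      _ = ‖u‖ ^ 2 * ‖a • v + b • w‖ ^ 2 := by ring
      _ ≤ ‖u‖ ^ 2 * (s * (M + g)) := by gcongr
      _ = s * (‖u‖ ^ 2 * (M + g)) := by ring

/-- The semi-inner product of a positive operator is the inner product pulled back along its
square root. -/
theorem innA_eq_inner_sqrt {A : H →L[ℂ] H} (hA : A.IsPositive) (x y : H) :
    innA A x y = inner ℂ (CFC.sqrt A x) (CFC.sqrt A y) := by
  have hA' : 0 ≤ A := (nonneg_iff_isPositive A).2 hA
  have hS : (CFC.sqrt A).IsPositive := (nonneg_iff_isPositive _).1 (CFC.sqrt_nonneg A)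
  have hsq : CFC.sqrt A (CFC.sqrt A x) = A x := by
    rw [← mul_apply_eq_comp, CFC.sqrt_mul_sqrt_self A hA']
  rw [innA, ← hsq]
  exact hS.isSymmetric _ _

theorem vnormA_eq_norm_sqrt {A : H →L[ℂ] H} (hA : A.IsPositive) (x : H) :
    vnormA A x = ‖CFC.sqrt A x‖ := by
  rw [vnormA, innA_eq_inner_sqrt hA, norm_eq_sqrt_re_inner (𝕜 := ℂ)]
  rfl

theorem stmt6 (A : H →L[ℂ] H) (hA : A.IsPositive) (hA0 : A ≠ 0) (x y z : H) :
    ‖innA A x y‖ ^ 2 + ‖innA A x z‖ ^ 2 ≤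
      vnormA A x ^ 2 *
        (max (vnormA A y ^ 2) (vnormA A z ^ 2) + ‖innA A y z‖) := by
  simp only [vnormA_eq_norm_sqrt hA, innA_eq_inner_sqrt hA]
  exact norm_inner_sq_add_norm_inner_sq_le _ _ _
end
end

section
/- Let T and S be bounded linear operators on H each admitting an A-adjoint. Then ω_A(T+S) ≤ sqrt( ω_A(T)² + ω_A(S)² + (1/2) · ‖T^{♯_A} T + S S^{♯_A}‖_A + ω_A(ST) ). -/
noncomputable section

open ContinuousLinearMap

variable {H : Type*} [NormedAddCommGroup H] [InnerProductSpace ℂ H] [CompleteSpace H]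

/-- A positive operator factors the semi-inner product it induces through its square root. -/
theorem exists_innA_eq_inner {A : H →L[ℂ] H} (hA : A.IsPositive) :
    ∃ B : H →L[ℂ] H, ∀ x y, innA A x y = inner ℂ (B x) (B y) := by
  have hA' : 0 ≤ A := (nonneg_iff_isPositive A).2 hA
  refine ⟨CFC.sqrt A, fun x y => ?_⟩
  have hB : (CFC.sqrt A).IsPositive := (nonneg_iff_isPositive _).1 (CFC.sqrt_nonneg A)
  have hBA : CFC.sqrt A (CFC.sqrt A x) = A x :=
    congrArg (fun L : H →L[ℂ] H => L x) (CFC.sqrt_mul_sqrt_self A hA')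
  rw [innA, ← hBA]
  exact hB.isSymmetric _ _

/-- Buzano's inequality. -/
theorem buzano_inequality {E : Type*} [NormedAddCommGroup E] [InnerProductSpace ℂ E]
    {a b e : E} (he : ‖e‖ = 1) :
    2 * (‖inner ℂ a e‖ * ‖inner ℂ e b‖) ≤ ‖a‖ * ‖b‖ + ‖inner ℂ a b‖ := by
  have hr : ‖(2 * inner ℂ e a) • e - a‖ = ‖a‖ := by
    have h := (ℂ ∙ e).reflection.norm_map a
    rwa [Submodule.reflection_apply, Submodule.starProjection_unit_singleton ℂ he, two_smul,
      ← add_smul, ← two_mul] at h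
  have hi : 2 * (inner ℂ a e * inner ℂ e b) =
      inner ℂ ((2 * inner ℂ e a) • e - a) b + inner ℂ a b := by
    simp only [inner_sub_left, inner_smul_left, map_mul, inner_conj_symm, map_ofNat]
    ring
  calc 2 * (‖inner ℂ a e‖ * ‖inner ℂ e b‖) = ‖2 * (inner ℂ a e * inner ℂ e b)‖ := by simp
    _ ≤ ‖inner ℂ ((2 * inner ℂ e a) • e - a) b‖ + ‖inner ℂ a b‖ := by
      rw [hi]; exact norm_add_le _ _
    _ ≤ ‖a‖ * ‖b‖ + ‖inner ℂ a b‖ := by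
      gcongr
      exact (norm_inner_le_norm _ _).trans_eq (by rw [hr])

/-- Krein's estimate: an operator symmetric for the semi-inner product `⟪B x, B y⟫` is bounded
for the induced seminorm, with constant its operator norm. -/
theorem norm_apply_le_opNorm_of_symmetric {E : Type*} [NormedAddCommGroup E] [InnerProductSpace ℂ E]
    {B P : E →L[ℂ] E}
    (hP : ∀ x y, inner ℂ (B (P x)) (B y) = inner ℂ (B x) (B (P y)))
    {x : E} (hx : ‖B x‖ = 1) : ‖B (P x)‖ ≤ ‖P‖ := by
  have hpow : ∀ (k : ℕ) (u v : E),
      inner ℂ (B ((P ^ k) u)) (B v) = inner ℂ (B u) (B ((P ^ k) v)) := by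
    intro k
    induction k with
    | zero => simp
    | succ k ih =>
      intro u v
      rw [pow_succ, mul_apply_eq_comp, ih, hP, ← mul_apply_eq_comp P, ← pow_succ', ← pow_succ]
  have hsq : ∀ k : ℕ, ‖B ((P ^ k) x)‖ ^ 2 ≤ ‖B ((P ^ (2 * k)) x)‖ := by
    intro k
    have h := norm_inner_le_norm (𝕜 := ℂ) (B x) (B ((P ^ (2 * k)) x))
    rw [two_mul, pow_add, mul_apply_eq_comp, ← hpow, hx, one_mul, inner_self_eq_norm_sq_to_K] at h
    rw [two_mul, pow_add, mul_apply_eq_comp]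
    simpa using h
  have hdouble : ∀ n : ℕ, ‖B (P x)‖ ^ 2 ^ n ≤ ‖B ((P ^ 2 ^ n) x)‖ := by
    intro n
    induction n with
    | zero => simp
    | succ n ih =>
      calc ‖B (P x)‖ ^ 2 ^ (n + 1) = (‖B (P x)‖ ^ 2 ^ n) ^ 2 := by rw [← pow_mul, pow_succ]
        _ ≤ ‖B ((P ^ 2 ^ n) x)‖ ^ 2 := by gcongr
        _ ≤ ‖B ((P ^ 2 ^ (n + 1)) x)‖ := by rw [pow_succ' 2 n]; exact hsq _
  have hbound : ∀ n : ℕ, ‖B (P x)‖ ^ 2 ^ n ≤ ‖B‖ * ‖x‖ * ‖P‖ ^ 2 ^ n := fun n =>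
    calc ‖B (P x)‖ ^ 2 ^ n ≤ ‖B ((P ^ 2 ^ n) x)‖ := hdouble n
      _ ≤ ‖B‖ * (‖P ^ 2 ^ n‖ * ‖x‖) := B.le_opNorm_of_le ((P ^ 2 ^ n).le_opNorm x)
      _ ≤ ‖B‖ * (‖P‖ ^ 2 ^ n * ‖x‖) := by
        gcongr
        exact norm_pow_le' P (by positivity)
      _ = ‖B‖ * ‖x‖ * ‖P‖ ^ 2 ^ n := by ring
  by_contra! hlt
  have hpos : 0 < ‖B (P x)‖ := (norm_nonneg P).trans_lt hlt
  have hlim : Filter.Tendsto (fun n : ℕ => ‖B‖ * ‖x‖ * (‖P‖ / ‖B (P x)‖) ^ 2 ^ n)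
      Filter.atTop (nhds (‖B‖ * ‖x‖ * 0)) :=
    ((tendsto_pow_atTop_nhds_zero_of_lt_one (by positivity) ((div_lt_one hpos).2 hlt)).comp
      (tendsto_pow_atTop_atTop_of_one_lt one_lt_two)).const_mul _
  have hge : (1 : ℝ) ≤ ‖B‖ * ‖x‖ * 0 := ge_of_tendsto' hlim fun n => by
    rw [div_pow, ← mul_div_assoc, le_div_iff₀ (by positivity), one_mul]
    exact hbound n
  norm_num at hge

/-- An operator with an adjoint for the semi-inner product `⟪B x, B y⟫` is bounded for the
induced seminorm. -/
theorem norm_apply_le_sqrt_of_adjoint {E : Type*} [NormedAddCommGroup E] [InnerProductSpace ℂ E]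
    {B T X : E →L[ℂ] E}
    (h : ∀ x y, inner ℂ (B (X x)) (B y) = inner ℂ (B x) (B (T y)))
    (h' : ∀ x y, inner ℂ (B (T x)) (B y) = inner ℂ (B x) (B (X y)))
    {x : E} (hx : ‖B x‖ = 1) : ‖B (T x)‖ ≤ √‖X * T‖ := by
  apply Real.le_sqrt_of_sq_le
  calc ‖B (T x)‖ ^ 2 = ‖inner ℂ (B ((X * T) x)) (B x)‖ := by
        rw [mul_apply_eq_comp, h, inner_self_eq_norm_sq_to_K]; simp
    _ ≤ ‖B ((X * T) x)‖ * ‖B x‖ := norm_inner_le_norm _ _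
    _ ≤ ‖X * T‖ := by
      rw [hx, mul_one]
      exact norm_apply_le_opNorm_of_symmetric (fun u v => by simp only [mul_apply_eq_comp, h, h']) hx

theorem norm_innA_le_wA {E : Type*} [NormedAddCommGroup E] [InnerProductSpace ℂ E]
    {A T : E →L[ℂ] E} {M : ℝ}
    (hM : ∀ x, vnormA A x = 1 → ‖innA A (T x) x‖ ≤ M) {x : E} (hx : vnormA A x = 1) :
    ‖innA A (T x) x‖ ≤ wA A T :=
  le_csSup ⟨M, by rintro _ ⟨y, hy, rfl⟩; exact hM y hy⟩ ⟨x, hx, rfl⟩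

theorem vnormA_le_opNormA {E : Type*} [NormedAddCommGroup E] [InnerProductSpace ℂ E]
    {A T : E →L[ℂ] E} {M : ℝ}
    (hM : ∀ x, vnormA A x = 1 → vnormA A (T x) ≤ M) {x : E} (hx : vnormA A x = 1) :
    vnormA A (T x) ≤ opNormA A T :=
  le_csSup ⟨M, by rintro _ ⟨y, hy, rfl⟩; exact hM y hy⟩ ⟨x, hx, rfl⟩

theorem stmt9 (A : H →L[ℂ] H) (hA : A.IsPositive) (hA0 : A ≠ 0)
    (T S Tsharp Ssharp : H →L[ℂ] H)
    (hT : IsReducedAAdjoint A T Tsharp) (hS : IsReducedAAdjoint A S Ssharp) :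
    wA A (T + S) ≤
      Real.sqrt (wA A T ^ 2 + wA A S ^ 2 +
        (1 / 2) * opNormA A (Tsharp * T + S * Ssharp) + wA A (S * T)) := by
  obtain ⟨B, hB⟩ := exists_innA_eq_inner hA
  have hv : ∀ x, vnormA A x = ‖B x‖ := fun x => by
    rw [vnormA, hB, inner_self_eq_norm_sq_to_K]
    norm_cast
    exact Real.sqrt_sq (norm_nonneg _)
  have hadj : ∀ {T X : H →L[ℂ] H}, IsReducedAAdjoint A T X →
      ∀ x y, inner ℂ (B (X x)) (B y) = inner ℂ (B x) (B (T y)) := fun {T X} h x y => by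
    have hx : A (X x) = adjoint T (A x) := congrArg (fun L : H →L[ℂ] H => L x) h.1
    rw [← hB, ← hB, innA, innA, hx, adjoint_inner_left]
  have hadj' : ∀ {T X : H →L[ℂ] H}, IsReducedAAdjoint A T X →
      ∀ x y, inner ℂ (B (T x)) (B y) = inner ℂ (B x) (B (X y)) := fun h x y => by
    rw [← inner_conj_symm, ← hadj h, inner_conj_symm]
  have hTb : ∀ x, ‖B x‖ = 1 → ‖B (T x)‖ ≤ √‖Tsharp * T‖ := fun x =>
    norm_apply_le_sqrt_of_adjoint (hadj hT) (hadj' hT)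
  have hSb : ∀ x, ‖B x‖ = 1 → ‖B (S x)‖ ≤ √‖Ssharp * S‖ := fun x =>
    norm_apply_le_sqrt_of_adjoint (hadj hS) (hadj' hS)
  have hSb' : ∀ x, ‖B x‖ = 1 → ‖B (Ssharp x)‖ ≤ √‖S * Ssharp‖ := fun x =>
    norm_apply_le_sqrt_of_adjoint (hadj' hS) (hadj hS)
  refine Real.sSup_le ?_ (Real.sqrt_nonneg _)
  rintro _ ⟨x, hx, rfl⟩
  have hx1 : ‖B x‖ = 1 := (hv x).symm.trans hx
  have hwT : ‖innA A (T x) x‖ ≤ wA A T := by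
    refine norm_innA_le_wA (M := √‖Tsharp * T‖) (fun y hy => ?_) hx
    rw [hv] at hy
    rw [hB]
    exact (norm_inner_le_norm _ _).trans (by rw [hy, mul_one]; exact hTb y hy)
  have hwS : ‖innA A (S x) x‖ ≤ wA A S := by
    refine norm_innA_le_wA (M := √‖Ssharp * S‖) (fun y hy => ?_) hx
    rw [hv] at hy
    rw [hB]
    exact (norm_inner_le_norm _ _).trans (by rw [hy, mul_one]; exact hSb y hy)
  have hwST : ‖innA A ((S * T) x) x‖ ≤ wA A (S * T) := by
    refine norm_innA_le_wA (M := √‖Tsharp * T‖ * √‖S * Ssharp‖) (fun y hy => ?_) hx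
    rw [hv] at hy
    rw [hB, mul_apply_eq_comp, hadj' hS]
    refine (norm_inner_le_norm _ _).trans ?_
    gcongr
    exacts [hTb y hy, hSb' y hy]
  have hop : ‖B ((Tsharp * T + S * Ssharp) x)‖ ≤ opNormA A (Tsharp * T + S * Ssharp) := by
    rw [← hv]
    refine vnormA_le_opNormA (M := ‖Tsharp * T + S * Ssharp‖) (fun y hy => ?_) hx
    rw [hv] at hy ⊢
    refine norm_apply_le_opNorm_of_symmetric (fun u v => ?_) hy
    simp only [add_apply, mul_apply_eq_comp, map_add, inner_add_left, inner_add_right, hadj hT,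
      hadj' hT, hadj hS, hadj' hS]
  have hsum : ‖B (T x)‖ ^ 2 + ‖B (Ssharp x)‖ ^ 2 ≤ ‖B ((Tsharp * T + S * Ssharp) x)‖ := by
    have h := re_inner_le_norm (𝕜 := ℂ) (B ((Tsharp * T + S * Ssharp) x)) (B x)
    rwa [add_apply, mul_apply_eq_comp, mul_apply_eq_comp, map_add, inner_add_left, hadj hT, hadj' hS, map_add,
      inner_self_eq_norm_sq, inner_self_eq_norm_sq, ← map_add, hx1, mul_one] at h
  have hbuz := buzano_inequality (a := B (T x)) (b := B (Ssharp x)) hx1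
  rw [← hadj' hS, ← hadj' hS, ← mul_apply_eq_comp S, ← hB, ← hB, ← hB] at hbuz
  have htri : ‖innA A ((T + S) x) x‖ ≤ ‖innA A (T x) x‖ + ‖innA A (S x) x‖ := by
    simp only [hB, add_apply, map_add, inner_add_left]
    exact norm_add_le _ _
  apply Real.le_sqrt_of_sq_le
  have hT2 := pow_le_pow_left₀ (norm_nonneg _) hwT 2
  have hS2 := pow_le_pow_left₀ (norm_nonneg _) hwS 2
  have hsq := pow_le_pow_left₀ (norm_nonneg _) htri 2
  nlinarith [sq_nonneg (‖B (T x)‖ - ‖B (Ssharp x)‖)]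
end
end

section
/- Let S_1, …, S_k be bounded linear operators on a complex Hilbert space H and let n ≥ 1 be an integer. Then ω( Σ_{i=1}^k S_i )^{4n} ≤ (k^{4n−1}/4) · ‖ Σ_{i=1}^k ( |S_i|^{4n} + |S_i^*|^{4n} ) ‖ + (k^{4n−1}/2) · Σ_{i=1}^k ω( |S_i|^{2n} |S_i^*|^{2n} ). -/
noncomputable section

open ContinuousLinearMap

variable {H : Type*} [NormedAddCommGroup H] [InnerProductSpace ℂ H] [CompleteSpace H]

/-- The numerical radius: `ω(T) := sup {|⟨T x, x⟩| : ‖x‖ = 1}`. -/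
def nrad (T : H →L[ℂ] H) : ℝ :=
  sSup {c : ℝ | ∃ x : H, ‖x‖ = 1 ∧ c = ‖(inner ℂ (T x) x : ℂ)‖}

/-- `R` is the absolute value `|X| = (X* X)^{1/2}` of `X`, i.e. the positive square root
of `X* X`. -/
def IsAbsOf (X R : H →L[ℂ] H) : Prop :=
  R.IsPositive ∧ R * R = adjoint X * X

set_option linter.unusedSectionVars false

/-- A positive operator whose square is the square of a self-adjoint operator dominates it. -/
lemma le_of_mul_self_eq {M D : H →L[ℂ] H} (hM : IsSelfAdjoint M) (hD : 0 ≤ D)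
    (h : D * D = M * M) : M ≤ D := by
  have habs : CFC.abs M = D := CFC.sqrt_unique (by rw [hM.star_eq, h]) hD
  rw [← habs, ← sub_nonneg, CFC.abs_sub_self M hM]
  exact nsmul_nonneg (CFC.negPart_nonneg M) 2

/-- The operator on `H × H`, with the Hilbert space norm, given by the block matrix
`[[A, B], [C, D]]`. -/
def blockOp (A B C D : H →L[ℂ] H) : WithLp 2 (H × H) →L[ℂ] WithLp 2 (H × H) :=
  (WithLp.prodContinuousLinearEquiv 2 ℂ H H).symm.toContinuousLinearMap ∘L
    ((A.coprod B).prod (C.coprod D)) ∘L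
      (WithLp.prodContinuousLinearEquiv 2 ℂ H H).toContinuousLinearMap

lemma blockOp_apply (A B C D : H →L[ℂ] H) (z : WithLp 2 (H × H)) :
    blockOp A B C D z = WithLp.toLp 2 (A z.fst + B z.snd, C z.fst + D z.snd) := rfl

/-- The positive operator `[[P, 0], [0, Q]]` is the absolute value of `[[0, S*], [S, 0]]`
when `P = |S|` and `Q = |S*|`, hence it dominates it. -/
lemma blockOp_le_of_isAbsOf {S P Q : H →L[ℂ] H} (hP : IsAbsOf S P)
    (hQ : IsAbsOf (adjoint S) Q) :
    blockOp 0 (adjoint S) S 0 ≤ blockOp P 0 0 Q := by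
  have hsa : IsSelfAdjoint (blockOp 0 (adjoint S) S 0) := by
    rw [ContinuousLinearMap.isSelfAdjoint_iff_isSymmetric]
    intro z w
    simp [blockOp_apply, adjoint_inner_left, adjoint_inner_right, add_comm]
  have hpos : 0 ≤ blockOp P 0 0 Q := by
    rw [nonneg_iff_isPositive, isPositive_iff_complex]
    intro z
    have h1 := (isPositive_iff_complex P).1 hP.1 z.fst
    have h2 := (isPositive_iff_complex Q).1 hQ.1 z.snd
    simp only [blockOp_apply, WithLp.prod_inner_apply, zero_apply, add_zero, zero_add]
    refine ⟨?_, ?_⟩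
    · rw [map_add, Complex.ofReal_add]
      exact congrArg₂ (· + ·) h1.1 h2.1
    · rw [map_add]
      exact add_nonneg h1.2 h2.2
  refine le_of_mul_self_eq hsa hpos ?_
  ext1 z
  have h1 : P (P z.fst) = adjoint S (S z.fst) := DFunLike.congr_fun hP.2 z.fst
  have h2 : Q (Q z.snd) = S (adjoint S z.snd) := by
    simpa using DFunLike.congr_fun hQ.2 z.snd
  simp [blockOp_apply, h1, h2]

/-- The mixed Schwarz inequality. -/
lemma norm_inner_sq_le_of_isAbsOf {S P Q : H →L[ℂ] H} (hP : IsAbsOf S P)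
    (hQ : IsAbsOf (adjoint S) Q) (x : H) :
    ‖inner ℂ (S x) x‖ ^ 2 ≤ (inner ℂ (P x) x).re * (inner ℂ (Q x) x).re := by
  obtain ⟨c, hc, hcs⟩ : ∃ c : ℂ, ‖c‖ = 1 ∧ c * inner ℂ (S x) x = ‖inner ℂ (S x) x‖ := by
    exact RCLike.exists_norm_eq_mul_self _ |>.imp fun c h => ⟨h.1, h.2.symm⟩
  have key (t : ℝ) :
      0 ≤ (inner ℂ (Q x) x).re * (t * t) + (-(2 * ‖inner ℂ (S x) x‖)) * t
        + (inner ℂ (P x) x).re := by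
    have h := (((le_def _ _).1 (blockOp_le_of_isAbsOf hP hQ)).re_inner_nonneg_left
      (WithLp.toLp 2 (x, ((t : ℂ) * c) • x)))
    have hcc : (starRingEnd ℂ) c * c = 1 := by
      rw [Complex.conj_mul', hc]; norm_num
    have hcs' : (starRingEnd ℂ) c * inner ℂ x (S x) = ‖inner ℂ (S x) x‖ := by
      have := congrArg (starRingEnd ℂ) hcs
      simpa using this
    have e : inner ℂ ((blockOp P 0 0 Q - blockOp 0 (adjoint S) S 0)
        (WithLp.toLp 2 (x, ((t : ℂ) * c) • x))) (WithLp.toLp 2 (x, ((t : ℂ) * c) • x)) =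
        inner ℂ (P x) x + (t * t : ℝ) * inner ℂ (Q x) x
          - ((2 * t * ‖inner ℂ (S x) x‖ : ℝ) : ℂ) := by
      simp only [sub_apply, blockOp_apply, WithLp.prod_inner_apply, WithLp.toLp_fst,
        WithLp.toLp_snd, smul_zero, inner_sub_left, zero_apply,
        add_zero, zero_add, map_smul, inner_smul_left, inner_smul_right, adjoint_inner_left,
        map_mul, Complex.conj_ofReal]
      push_cast
      linear_combination (t * t * inner ℂ (Q x) x) * hcc - t * hcs - t * hcs'
    rw [e] at h
    simp only [map_sub, map_add, RCLike.re_to_complex, Complex.re_ofReal_mul,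
      Complex.ofReal_re] at h
    linarith
  have := discrim_le_zero key
  rw [discrim] at this
  nlinarith

/-- The McCarthy inequality for natural powers. -/
lemma re_inner_pow_le {P : H →L[ℂ] H} (hP : P.IsPositive) {x : H} (hx : ‖x‖ = 1) (m : ℕ) :
    (inner ℂ (P x) x).re ^ m ≤ (inner ℂ ((P ^ m) x) x).re := by
  set a : ℝ := (inner ℂ (P x) x).re with ha
  have ha0 : 0 ≤ a := hP.re_inner_nonneg_left x
  induction m with
  | zero => simp [hx]
  | succ m ih =>
    set B : H →L[ℂ] H := P - (a : ℂ) • 1 with hB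
    have hcomm : Commute P ((a : ℂ) • (1 : H →L[ℂ] H)) := (Commute.one_right P).smul_right _
    have hBsa : adjoint B = B := by
      rw [← star_eq_adjoint, hB, star_sub, star_smul, star_one, hP.isSelfAdjoint.star_eq]
      simp
    have hgeom := hcomm.mul_geom_sum₂ m
    have hpos : 0 ≤ B * (P ^ m - ((a : ℂ) • (1 : H →L[ℂ] H)) ^ m) := by
      rw [← hgeom, Finset.mul_sum, Finset.mul_sum]
      refine Finset.sum_nonneg fun i _ => ?_
      have hBP : Commute B (P ^ i) :=
        ((Commute.refl P).sub_left hcomm.symm).pow_right i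
      have hterm : B * (B * (P ^ i * ((a : ℂ) • (1 : H →L[ℂ] H)) ^ (m - 1 - i))) =
          ((a ^ (m - 1 - i) : ℝ) : ℂ) • (B ∘L (P ^ i) ∘L adjoint B) := by
        rw [hBsa, ← mul_def, ← mul_def, ← hBP.eq, smul_pow, one_pow, mul_smul_comm, mul_one,
          mul_smul_comm, mul_smul_comm, Complex.ofReal_pow]
      rw [hterm, nonneg_iff_isPositive]
      refine IsPositive.smul_of_nonneg (IsPositive.conj_adjoint ?_ B) ?_
      · exact (nonneg_iff_isPositive _).1
          (CStarAlgebra.pow_nonneg ((nonneg_iff_isPositive _).2 hP) i)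
      · exact_mod_cast pow_nonneg ha0 _
    have h := ((nonneg_iff_isPositive _).1 hpos).re_inner_nonneg_left x
    have e : inner ℂ ((B * (P ^ m - ((a : ℂ) • (1 : H →L[ℂ] H)) ^ m)) x) x =
        inner ℂ ((P ^ (m + 1)) x) x - (a : ℂ) * inner ℂ ((P ^ m) x) x
          - ((a ^ m : ℝ) : ℂ) * inner ℂ (P x) x + ((a ^ (m + 1) : ℝ) : ℂ) := by
      simp [hB, smul_pow, pow_succ', hx]
      ring
    rw [e] at h
    simp only [map_sub, map_add, RCLike.re_to_complex, Complex.re_ofReal_mul,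
      Complex.ofReal_re, ← ha] at h
    have := mul_le_mul_of_nonneg_left ih ha0
    rw [pow_succ a] at h ⊢
    linarith

/-- The Buzano inequality. -/
lemma norm_inner_mul_inner_le {e : H} (he : ‖e‖ = 1) (a b : H) :
    ‖(inner ℂ a e : ℂ)‖ * ‖(inner ℂ e b : ℂ)‖ ≤ (‖a‖ * ‖b‖ + ‖(inner ℂ a b : ℂ)‖) / 2 := by
  have hee : inner ℂ e e = (1 : ℂ) := by simp [inner_self_eq_norm_sq_to_K, he]
  set r : H := (2 * inner ℂ e b : ℂ) • e - b with hr
  have hnorm : ‖r‖ = ‖b‖ := by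
    have : inner ℂ r r = (inner ℂ b b : ℂ) := by
      simp only [hr, inner_sub_left, inner_sub_right, inner_smul_left, inner_smul_right, hee,
        map_mul, map_ofNat, inner_conj_symm]
      ring
    rw [@norm_eq_sqrt_re_inner ℂ _ _ _ _ r, this, ← norm_eq_sqrt_re_inner]
  have h1 : ‖(inner ℂ a r : ℂ)‖ ≤ ‖a‖ * ‖b‖ := hnorm ▸ norm_inner_le_norm a r
  have h2 : 2 * (inner ℂ a e * inner ℂ e b : ℂ) = inner ℂ a r + inner ℂ a b := by
    simp only [hr, inner_sub_right, inner_smul_right]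
    ring
  have h3 := congrArg norm h2
  rw [norm_mul, norm_mul, Complex.norm_ofNat] at h3
  have h4 := norm_add_le (inner ℂ a r : ℂ) (inner ℂ a b)
  linarith

lemma norm_inner_le_nrad (T : H →L[ℂ] H) {x : H} (hx : ‖x‖ = 1) :
    ‖inner ℂ (T x) x‖ ≤ nrad T := by
  refine le_csSup ⟨‖T‖, ?_⟩ ⟨x, hx, rfl⟩
  rintro _ ⟨y, hy, rfl⟩
  have h1 := norm_inner_le_norm (𝕜 := ℂ) (T y) y
  have h2 := T.le_opNorm y
  rw [hy, mul_one] at h1 h2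
  exact h1.trans h2

lemma nrad_nonneg (T : H →L[ℂ] H) : 0 ≤ nrad T :=
  Real.sSup_nonneg (by rintro _ ⟨x, -, rfl⟩; exact norm_nonneg _)

lemma nrad_pow_le {T : H →L[ℂ] H} {m : ℕ} (hm : m ≠ 0) {R : ℝ} (hR : 0 ≤ R)
    (h : ∀ x : H, ‖x‖ = 1 → ‖inner ℂ (T x) x‖ ^ m ≤ R) : nrad T ^ m ≤ R := by
  have hle : nrad T ≤ R ^ (m⁻¹ : ℝ) := by
    refine Real.sSup_le ?_ (Real.rpow_nonneg hR _)
    rintro _ ⟨x, hx, rfl⟩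
    rw [← Real.pow_rpow_inv_natCast (norm_nonneg (inner ℂ (T x) x)) hm]
    exact Real.rpow_le_rpow (by positivity) (h x hx) (by positivity)
  calc nrad T ^ m ≤ (R ^ (m⁻¹ : ℝ)) ^ m := pow_le_pow_left₀ (nrad_nonneg T) hle m
    _ = R := Real.rpow_inv_natCast_pow hR hm

lemma norm_inner_pow_le_of_isAbsOf {S P Q : H →L[ℂ] H} (hP : IsAbsOf S P)
    (hQ : IsAbsOf (adjoint S) Q) (n : ℕ) {x : H} (hx : ‖x‖ = 1) :
    ‖inner ℂ (S x) x‖ ^ (4 * n) ≤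
      (inner ℂ ((P ^ (4 * n) + Q ^ (4 * n)) x) x).re / 4 +
        nrad (P ^ (2 * n) * Q ^ (2 * n)) / 2 := by
  have hp0 : 0 ≤ (inner ℂ (P x) x).re := hP.1.re_inner_nonneg_left x
  have hq0 : 0 ≤ (inner ℂ (Q x) x).re := hQ.1.re_inner_nonneg_left x
  have sq_inner {A : H →L[ℂ] H} (hA : A.IsPositive) :
      (inner ℂ ((A ^ (4 * n)) x) x).re = ‖(A ^ (2 * n)) x‖ ^ 2 := by
    have hs : (A ^ (2 * n)).IsSymmetric :=
      isSelfAdjoint_iff_isSymmetric.1 (hA.isSelfAdjoint.pow _)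
    rw [show 4 * n = 2 * n + 2 * n by ring, pow_add]
    refine (congrArg Complex.re (hs _ _)).trans ?_
    exact inner_self_eq_norm_sq (𝕜 := ℂ) _
  have hQs : (Q ^ (2 * n)).IsSymmetric :=
    isSelfAdjoint_iff_isSymmetric.1 (hQ.1.isSelfAdjoint.pow _)
  have hPs : (P ^ (2 * n)).IsSymmetric :=
    isSelfAdjoint_iff_isSymmetric.1 (hP.1.isSelfAdjoint.pow _)
  have hcross : ‖(inner ℂ ((P ^ (2 * n)) x) ((Q ^ (2 * n)) x) : ℂ)‖ ≤
      nrad (P ^ (2 * n) * Q ^ (2 * n)) := by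
    refine le_trans (le_of_eq ?_) (norm_inner_le_nrad _ hx)
    rw [norm_inner_symm]
    exact congrArg norm (hPs _ _).symm
  have hbuz := norm_inner_mul_inner_le hx ((P ^ (2 * n)) x) ((Q ^ (2 * n)) x)
  rw [norm_inner_symm x] at hbuz
  calc ‖inner ℂ (S x) x‖ ^ (4 * n) = (‖inner ℂ (S x) x‖ ^ 2) ^ (2 * n) := by
        rw [← pow_mul]; ring_nf
    _ ≤ ((inner ℂ (P x) x).re * (inner ℂ (Q x) x).re) ^ (2 * n) :=
        pow_le_pow_left₀ (by positivity) (norm_inner_sq_le_of_isAbsOf hP hQ x) _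
    _ = (inner ℂ (P x) x).re ^ (2 * n) * (inner ℂ (Q x) x).re ^ (2 * n) := mul_pow _ _ _
    _ ≤ ‖inner ℂ ((P ^ (2 * n)) x) x‖ * ‖inner ℂ ((Q ^ (2 * n)) x) x‖ := by
        gcongr
        · exact (re_inner_pow_le hP.1 hx _).trans (Complex.re_le_norm _)
        · exact (re_inner_pow_le hQ.1 hx _).trans (Complex.re_le_norm _)
    _ ≤ _ := by
        rw [add_apply, inner_add_left, Complex.add_re, sq_inner hP.1, sq_inner hQ.1]
        nlinarith [sq_nonneg (‖(P ^ (2 * n)) x‖ - ‖(Q ^ (2 * n)) x‖)]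

theorem stmt17 (k : ℕ) (hk : 1 ≤ k) (n : ℕ) (hn : 1 ≤ n)
    (S absS absSstar : Fin k → (H →L[ℂ] H))
    (habs : ∀ i, IsAbsOf (S i) (absS i))
    (habsStar : ∀ i, IsAbsOf (adjoint (S i)) (absSstar i)) :
    nrad (∑ i, S i) ^ (4 * n) ≤
      ((k : ℝ) ^ (4 * n - 1) / 4) *
          ‖∑ i, ((absS i) ^ (4 * n) + (absSstar i) ^ (4 * n))‖ +
        ((k : ℝ) ^ (4 * n - 1) / 2) *
          ∑ i, nrad ((absS i) ^ (2 * n) * (absSstar i) ^ (2 * n)) := by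
  set A := ∑ i, ((absS i) ^ (4 * n) + (absSstar i) ^ (4 * n)) with hA
  have hnrad : 0 ≤ ∑ i, nrad ((absS i) ^ (2 * n) * (absSstar i) ^ (2 * n)) :=
    Finset.sum_nonneg fun i _ => nrad_nonneg _
  refine nrad_pow_le (by omega) (by positivity) fun x hx => ?_
  have hpow : (∑ i, ‖inner ℂ (S i x) x‖) ^ (4 * n) ≤
      (k : ℝ) ^ (4 * n - 1) * ∑ i, ‖inner ℂ (S i x) x‖ ^ (4 * n) := by
    have h := pow_sum_le_card_mul_sum_pow (s := Finset.univ)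
      (f := fun i => ‖inner ℂ (S i x) x‖) (fun i _ => norm_nonneg _) (4 * n - 1)
    rwa [Finset.card_univ, Fintype.card_fin, show 4 * n - 1 + 1 = 4 * n by omega] at h
  have hAx : (inner ℂ (A x) x).re ≤ ‖A‖ := by
    have h1 := (Complex.re_le_norm _).trans (norm_inner_le_norm (𝕜 := ℂ) (A x) x)
    have h2 := A.le_opNorm x
    rw [hx, mul_one] at h1 h2
    exact h1.trans h2
  have hsum : ∑ i, ‖inner ℂ (S i x) x‖ ^ (4 * n) ≤
      (inner ℂ (A x) x).re / 4 +
        (∑ i, nrad ((absS i) ^ (2 * n) * (absSstar i) ^ (2 * n))) / 2 := by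
    refine (Finset.sum_le_sum fun i _ =>
      norm_inner_pow_le_of_isAbsOf (habs i) (habsStar i) n hx).trans_eq ?_
    rw [Finset.sum_add_distrib, ← Finset.sum_div, ← Finset.sum_div, hA, sum_apply, sum_inner,
      Complex.re_sum]
  have hk0 : (0 : ℝ) ≤ (k : ℝ) ^ (4 * n - 1) := by positivity
  calc ‖inner ℂ ((∑ i, S i) x) x‖ ^ (4 * n)
      ≤ (∑ i, ‖inner ℂ (S i x) x‖) ^ (4 * n) := by
        rw [sum_apply, sum_inner]
        gcongr
        exact norm_sum_le _ _
    _ ≤ (k : ℝ) ^ (4 * n - 1) * (‖A‖ / 4 +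
        (∑ i, nrad ((absS i) ^ (2 * n) * (absSstar i) ^ (2 * n))) / 2) :=
        hpow.trans (mul_le_mul_of_nonneg_left (by linarith) hk0)
    _ = _ := by ring
end
end
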